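/- Let S = S₀ ⊕ S₁ ⊕ … be a positively graded Cohen-Macaulay ring with S₀ a field and S a finitely generated S₀-algebra, and let R be a finite graded S-module with a minimal graded free resolution 0 → ⊕_l S(−s_l) →ψ ⊕_k S(−r_k) →φ ⊕_j S(−q_j) →p R → 0. Let φ' be the matrix φ with its first row erased and I' its zeroth Fitting ideal. Assume depth(Ann_S R, S) = 2 and depth(I', S) ≥ 4. Set S_Y := S/Ann_S R and C := Hom_{S_Y}(R, S_Y). Then R ≅ Hom_{S_Y}(C, C) as S_Y-modules, and R acquires an S-algebra structure by defining multiplication as composition of endomorphisms of C. -/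

import Mathlib

open Matrix

def depthGE (A : Type) [CommRing A] (I : Ideal A) (M : Type) [AddCommGroup M] [Module A M]
    (n : ℕ) : Prop :=
  ∃ rs : List A, rs.length = n ∧ (∀ x ∈ rs, x ∈ I) ∧ RingTheory.Sequence.IsRegular M rs

def depthEq (A : Type) [CommRing A] (I : Ideal A) (M : Type) [AddCommGroup M] [Module A M]
    (n : ℕ) : Prop :=
  depthGE A I M n ∧ ¬ depthGE A I M (n + 1)

def IsFreeRes₂ (A : Type) [CommRing A] {R : Type} [AddCommGroup R] [Module A R]
    {ι₀ ι₁ ι₂ : Type} [Fintype ι₀] [Fintype ι₁] [Fintype ι₂]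
    (φ : Matrix ι₀ ι₁ A) (ψ : Matrix ι₁ ι₂ A) (p : (ι₀ → A) →ₗ[A] R) : Prop :=
  Function.Surjective p ∧ LinearMap.ker p = LinearMap.range φ.mulVecLin ∧
    LinearMap.ker φ.mulVecLin = LinearMap.range ψ.mulVecLin ∧
    LinearMap.ker ψ.mulVecLin = ⊥

def maxMinors (A : Type) [CommRing A] {m : ℕ} {J : Type} [Fintype J] [DecidableEq J]
    (M : Matrix (Fin m) J A) : Ideal A :=
  Ideal.span {x | ∃ c : Fin m → J, Function.Injective c ∧ x = (M.submatrix id c).det}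

/-- The irrelevant ideal of a positively graded ring: the ideal generated by all
homogeneous elements of positive degree. -/
def grIrrel (K S : Type) [Field K] [CommRing S] [Algebra K S]
    (𝒜 : ℕ → Submodule K S) : Ideal S :=
  Ideal.span {x : S | ∃ i : ℕ, 0 < i ∧ x ∈ 𝒜 i}

/-- `x` is homogeneous of degree `d ∈ ℤ` (for `d < 0` this means `x = 0`). -/
def homogOfDeg (K S : Type) [Field K] [CommRing S] [Algebra K S]
    (𝒜 : ℕ → Submodule K S) (d : ℤ) (x : S) : Prop :=
  if 0 ≤ d then x ∈ 𝒜 d.toNat else x = 0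

/-- A positively graded ring, finitely generated over the field `S₀`, is Cohen-Macaulay
iff the depth of the irrelevant maximal ideal equals the Krull dimension. -/
def IsCMGraded (K S : Type) [Field K] [CommRing S] [Algebra K S]
    (𝒜 : ℕ → Submodule K S) : Prop :=
  ∃ rs : List S, (∀ x ∈ rs, x ∈ grIrrel K S 𝒜) ∧ RingTheory.Sequence.IsRegular S rs ∧
    (rs.length : WithBot ℕ∞) = ringKrullDim S

/-!
Let `J` be generated by a regular sequence of length four in `I'`. By the long exact sequences of
the resolution, `Ext^i(S/J, R) = 0` for `i < 2`, so `R = Hom(J, R)`: an element of `R` is the same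
thing as a linear map `J → R`. By Cramer's rule `I'` kills `R / S e₀`, where `e₀` is the first
generator of `R`. Thus `J R ⊆ S e₀`, and `S_Y ≅ S e₀` because `R` has no `J`-torsion. It follows
that an endomorphism of `R` is determined by its value on `e₀` and that every value occurs, which
gives `End R = R` as a commutative ring. Multiplication by an element of `J` is an element of
`C = Hom(R, S e₀)`, so an endomorphism of `C` restricts to a map `J → Hom(R, R)`, which is again
given by an element of `End R`. This identifies `End C` with `End R`.
-/

open CategoryTheory Abelian Function RingTheory.Sequence

universe v u w

section ExtVanishing

variable {C : Type u} [Category.{v} C] [Abelian C] [HasExt.{w} C]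

/-- `Ext^i(N, M) = 0` for all `i < k`, that is, the grade of `N` on `M` is at least `k`. -/
def ExtVanishesBelow (N M : C) (k : ℕ) : Prop :=
  ∀ i < k, Subsingleton (Ext N M i)

theorem ExtVanishesBelow.mono {N M : C} {k l : ℕ} (h : ExtVanishesBelow N M l) (hkl : k ≤ l) :
    ExtVanishesBelow N M k :=
  fun i hi ↦ h i (hi.trans_le hkl)

theorem ExtVanishesBelow.of_shortExact {N : C} {X : ShortComplex C} (hX : X.ShortExact) {k : ℕ}
    (h₁ : ExtVanishesBelow N X.X₁ (k + 1)) (h₂ : ExtVanishesBelow N X.X₂ k) :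
    ExtVanishesBelow N X.X₃ k := by
  refine fun i hi ↦ subsingleton_of_forall_eq 0 fun x ↦ ?_
  have := h₁ (i + 1) (by lia)
  have := h₂ i hi
  obtain ⟨y, rfl⟩ := Ext.covariant_sequence_exact₃ N hX x rfl (Subsingleton.elim _ _)
  rw [Subsingleton.elim y 0, Ext.zero_comp]

theorem ExtVanishesBelow.of_shortExact_of_comp_eq_zero {N : C} {X : ShortComplex C}
    (hX : X.ShortExact) (hf : ∀ i (x : Ext N X.X₁ i), x.comp (Ext.mk₀ X.f) (add_zero i) = 0)
    {k : ℕ} (h₃ : ExtVanishesBelow N X.X₃ k) : ExtVanishesBelow N X.X₁ (k + 1) := by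
  refine fun i hi ↦ subsingleton_of_forall_eq 0 fun x ↦ ?_
  cases i with
  | zero =>
    have := hX.mono_f
    exact Ext.postcomp_mk₀_injective_of_mono N X.f
      ((hf 0 x).trans (Ext.zero_comp (h := add_zero 0) ..).symm)
  | succ i =>
    have := h₃ i (by lia)
    obtain ⟨y, rfl⟩ := Ext.covariant_sequence_exact₁ N hX x (hf _ x) rfl
    rw [Subsingleton.elim y 0, Ext.zero_comp]

end ExtVanishing

section ModuleExtVanishing

variable {S : Type u} [CommRing S] [Small.{v} S]

theorem ExtVanishesBelow.pi {N : ModuleCat.{v} S} {M : Type v} [AddCommGroup M] [Module S M]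
    {k : ℕ} (h : ExtVanishesBelow N (ModuleCat.of S M) k) (ι : Type) [Finite ι] :
    ExtVanishesBelow N (ModuleCat.of S (ι → M)) k := by
  classical
  have := Fintype.ofFinite ι
  refine fun i hi ↦ subsingleton_of_forall_eq 0 fun x ↦ ?_
  have := h i hi
  have hid : 𝟙 (ModuleCat.of S (ι → M)) = ∑ j, ModuleCat.ofHom (LinearMap.proj j) ≫
      ModuleCat.ofHom (LinearMap.single S (fun _ ↦ M) j) := by
    refine ModuleCat.hom_ext (LinearMap.ext fun m ↦ ?_)
    simp [ModuleCat.hom_sum, Finset.univ_sum_single]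
  rw [← Ext.comp_mk₀_id x, hid, Ext.mk₀_sum, Ext.comp_sum]
  refine Finset.sum_eq_zero fun j _ ↦ ?_
  rw [← Ext.mk₀_comp_mk₀, ← Ext.comp_assoc_of_third_deg_zero,
    Subsingleton.elim (x.comp (Ext.mk₀ _) _) 0, Ext.zero_comp]

theorem ExtVanishesBelow.of_isWeaklyRegular {N : ModuleCat.{v} S} {rs : List S}
    (hN : ∀ a ∈ rs, a ∈ Module.annihilator S N) :
    ∀ {M : ModuleCat.{v} S}, IsWeaklyRegular M rs → ExtVanishesBelow N M rs.length := by
  induction rs with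
  | nil => simp [ExtVanishesBelow]
  | cons a rs ih =>
    intro M hM
    rw [isWeaklyRegular_cons_iff] at hM
    refine .of_shortExact_of_comp_eq_zero hM.1.smulShortComplex_shortExact (fun i x ↦ ?_)
      (ih (fun b hb ↦ hN b (List.mem_cons_of_mem a hb)) hM.2)
    exact DFunLike.congr_fun (congrArg AddCommGrpCat.Hom.hom
      (Ext.postcomp_smul_id_eq_zero_of_mem_annihilator (hN a List.mem_cons_self) i)) x

theorem ExtVanishesBelow.of_linearMap_shortExact {N : ModuleCat.{v} S} {M₁ M₂ M₃ : Type v}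
    [AddCommGroup M₁] [Module S M₁] [AddCommGroup M₂] [Module S M₂] [AddCommGroup M₃] [Module S M₃]
    {f : M₁ →ₗ[S] M₂} {g : M₂ →ₗ[S] M₃} (hf : Injective f) (hfg : Exact f g) (hg : Surjective g)
    {k : ℕ} (h₁ : ExtVanishesBelow N (ModuleCat.of S M₁) (k + 1))
    (h₂ : ExtVanishesBelow N (ModuleCat.of S M₂) k) :
    ExtVanishesBelow N (ModuleCat.of S M₃) k :=
  .of_shortExact (ModuleCat.shortComplex_shortExact
    (ModuleCat.shortComplexOfCompEqZero f g hfg.linearMap_comp_eq_zero) hfg hf hg) h₁ h₂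

theorem ExtVanishesBelow.of_resolution {N : ModuleCat.{v} S} {F₂ F₁ F₀ M : Type v}
    [AddCommGroup F₂] [Module S F₂] [AddCommGroup F₁] [Module S F₁] [AddCommGroup F₀] [Module S F₀]
    [AddCommGroup M] [Module S M] {g : F₂ →ₗ[S] F₁} {f : F₁ →ₗ[S] F₀} {p : F₀ →ₗ[S] M}
    (hg : Injective g) (hgf : Exact g f) (hfp : Exact f p) (hp : Surjective p) {k : ℕ}
    (h₂ : ExtVanishesBelow N (ModuleCat.of S F₂) (k + 2))
    (h₁ : ExtVanishesBelow N (ModuleCat.of S F₁) (k + 1))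
    (h₀ : ExtVanishesBelow N (ModuleCat.of S F₀) k) :
    ExtVanishesBelow N (ModuleCat.of S M) k := by
  have hrange : ExtVanishesBelow N (ModuleCat.of S (LinearMap.range f)) (k + 1) := by
    refine .of_linearMap_shortExact hg ?_ f.surjective_rangeRestrict h₂ h₁
    rw [LinearMap.exact_iff, LinearMap.ker_rangeRestrict, hgf.linearMap_ker_eq]
  refine .of_linearMap_shortExact (LinearMap.range f).subtype_injective ?_ hp hrange h₀
  rw [LinearMap.exact_iff, Submodule.range_subtype, hfp.linearMap_ker_eq]

end ModuleExtVanishing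

section IdealClosed

variable {S : Type*} [CommRing S] {J : Ideal S} {R : Type*} [AddCommGroup R] [Module S R]
  {M : Type*} [AddCommGroup M] [Module S M]

/-- `R` is closed with respect to `J` if the natural map `R → Hom(J, R)`, which sends `x` to
multiplication by `x`, is bijective. Equivalently, `Ext^i(S/J, R) = 0` for `i < 2`. -/
def IsIdealClosed (J : Ideal S) (R : Type*) [AddCommGroup R] [Module S R] : Prop :=
  ∀ l : J →ₗ[S] R, ∃! x : R, ∀ g : J, (g : S) • x = l g

namespace IsIdealClosed

theorem ext (hR : IsIdealClosed J R) {x y : R} (h : ∀ g ∈ J, g • x = g • y) : x = y :=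
  (hR ((LinearMap.toSpanSingleton S R y).domRestrict J)).unique (fun g ↦ h g g.2) fun _ ↦ rfl

theorem linearMap (hR : IsIdealClosed J R) (M : Type*) [AddCommGroup M] [Module S M] :
    IsIdealClosed J (M →ₗ[S] R) := by
  intro l
  choose u hu _ using fun m ↦ hR (l.flip m)
  have hu : ∀ m, ∀ g ∈ J, ∀ hg, g • u m = l ⟨g, hg⟩ m := fun m g _ hg ↦ hu m ⟨g, hg⟩
  let U : M →ₗ[S] R :=
    { toFun := u
      map_add' := fun m n ↦ hR.ext fun g hg ↦ by simp only [smul_add, hu _ g hg hg, map_add]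
      map_smul' := fun a m ↦ hR.ext fun g hg ↦ by
        simp only [smul_comm g, hu _ g hg hg, map_smul, RingHom.id_apply] }
  refine ⟨U, fun g ↦ LinearMap.ext fun m ↦ hu m g g.2 g.2, fun V hV ↦ ?_⟩
  refine LinearMap.ext fun m ↦ hR.ext fun g hg ↦ ?_
  rw [← LinearMap.smul_apply, hV ⟨g, hg⟩, ← hu m g hg hg]
  rfl

theorem linearMap_ext (hR : IsIdealClosed J R) {N : Submodule S M}
    (hN : ∀ g ∈ J, ∀ m : M, g • m ∈ N) {u v : M →ₗ[S] R} (huv : Set.EqOn u v N) : u = v :=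
  LinearMap.ext fun m ↦ hR.ext fun g hg ↦ by
    rw [← map_smul, ← map_smul, huv (hN g hg m)]

theorem exists_linearMap_extension (hR : IsIdealClosed J R) {N : Submodule S M}
    (hN : ∀ g ∈ J, ∀ m : M, g • m ∈ N) (σ : N →ₗ[S] R) :
    ∃ u : M →ₗ[S] R, ∀ n : N, u n = σ n := by
  let mulInto : J →ₗ[S] M →ₗ[S] N :=
    LinearMap.codRestrict₂ ((LinearMap.lsmul S M).domRestrict J) N.subtype N.subtype_injective
      fun g m ↦ by simpa using hN g g.2 m
  have coe_mulInto (g : J) (m : M) : (mulInto g m : M) = (g : S) • m :=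
    LinearMap.codRestrict₂_apply _ N.subtype ..
  obtain ⟨u, hu, -⟩ := hR.linearMap M (mulInto.compr₂ σ)
  refine ⟨u, fun n ↦ hR.ext fun g hg ↦ ?_⟩
  have hgn : mulInto ⟨g, hg⟩ n = g • n := Subtype.ext (coe_mulInto _ _)
  rw [← LinearMap.smul_apply, hu ⟨g, hg⟩, LinearMap.compr₂_apply, hgn, map_smul]

section Singleton

variable {e₀ : R} (hR : IsIdealClosed J R) (hJ : ∀ g ∈ J, ∀ r : R, g • r ∈ S ∙ e₀)
include hR hJ

theorem linearMap_ext_singleton {u v : R →ₗ[S] R} (h : u e₀ = v e₀) : u = v :=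
  hR.linearMap_ext hJ <| LinearMap.eqOn_span <| Set.eqOn_singleton.2 h

theorem mem_annihilator_of_smul_eq_zero {s : S} (hs : s • e₀ = 0) :
    s ∈ Module.annihilator S R := by
  rw [Module.mem_annihilator_iff_lsmul_eq_zero]
  exact hR.linearMap_ext_singleton hJ (by simpa using hs)

theorem bijective_applyₗ :
    Bijective (LinearMap.applyₗ e₀ : (R →ₗ[S] R) →ₗ[S] R) := by
  refine ⟨fun u v h ↦ hR.linearMap_ext_singleton hJ h, fun x ↦ ?_⟩
  have hx (s : S) (hs : s • e₀ = 0) : s • x = 0 :=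
    Module.mem_annihilator.1 (hR.mem_annihilator_of_smul_eq_zero hJ hs) x
  obtain ⟨u, hu⟩ := hR.exists_linearMap_extension hJ (LinearPMap.mkSpanSingleton' e₀ x hx).toFun
  exact ⟨u, (hu ⟨e₀, Submodule.mem_span_singleton_self e₀⟩).trans
    (LinearPMap.mkSpanSingleton'_apply_self e₀ x hx _)⟩

theorem linearMap_comp_comm (u v : R →ₗ[S] R) : u ∘ₗ v = v ∘ₗ u := by
  -- If `g u(e₀) = t e₀` and `h v(e₀) = s e₀`, then both `h g u(v(e₀))` and `h g v(u(e₀))` are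
  -- `s t e₀`.
  refine hR.linearMap_ext_singleton hJ <| hR.ext fun g hg ↦ hR.ext fun h hh ↦ ?_
  obtain ⟨t, ht⟩ := Submodule.mem_span_singleton.1 (hJ g hg (u e₀))
  obtain ⟨s, hs⟩ := Submodule.mem_span_singleton.1 (hJ h hh (v e₀))
  calc h • g • u (v e₀) = s • t • e₀ := by
        rw [smul_comm, ← map_smul, ← hs, map_smul, smul_comm, ht]
    _ = h • g • v (u e₀) := by rw [← map_smul v, ← ht, map_smul, smul_comm h, ← hs, smul_comm]

variable {B : Type*} [AddCommGroup B] [Module S B] {ι : B →ₗ[S] R} (hι : Injective ι)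
  (hrange : LinearMap.range ι = S ∙ e₀)
include hι hrange

theorem bijective_llcomp_flip :
    Bijective (LinearMap.flip (LinearMap.llcomp S R R B) :
      (R →ₗ[S] R) →ₗ[S] (R →ₗ[S] B) →ₗ[S] (R →ₗ[S] B)) := by
  let c : J →ₗ[S] R →ₗ[S] B := LinearMap.codRestrict₂ ((LinearMap.lsmul S R).domRestrict J) ι hι
    fun g r ↦ hrange ▸ hJ g g.2 r
  have hc (g : J) (r : R) : ι (c g r) = (g : S) • r := LinearMap.codRestrict₂_apply ..
  have smul_eq (d : R →ₗ[S] B) : ∃ s : S, ∀ h : J, (h : S) • d = s • c h := by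
    obtain ⟨s, hs⟩ := Submodule.mem_span_singleton.1 (hrange ▸ LinearMap.mem_range_self ι (d e₀))
    refine ⟨s, fun h ↦ LinearMap.ext fun r ↦ hι ?_⟩
    obtain ⟨t, ht⟩ := Submodule.mem_span_singleton.1 (hJ h h.2 r)
    calc ι ((h : S) • d r) = ι (d (t • e₀)) := by rw [← map_smul, ht]
      _ = s • t • e₀ := by rw [map_smul, map_smul, ← hs, smul_comm]
      _ = ι (s • c h r) := by rw [ht, map_smul, hc]
  refine ⟨fun u v huv ↦ LinearMap.ext fun r ↦ hR.ext fun g hg ↦ ?_, fun F ↦ ?_⟩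
  · rw [← hc ⟨g, hg⟩, ← hc ⟨g, hg⟩]
    exact congrArg ι (LinearMap.congr_fun₂ huv (c ⟨g, hg⟩) r)
  · obtain ⟨u, hu, -⟩ := hR.linearMap R ((F ∘ₗ c).compr₂ ι)
    have hu (h : J) (r : R) : (h : S) • u r = ι (F (c h) r) := LinearMap.congr_fun (hu h) r
    refine ⟨u, LinearMap.ext₂ fun d r ↦ hι <| hR.ext fun h hh ↦ ?_⟩
    obtain ⟨s, hs⟩ := smul_eq d
    calc h • ι (d (u r)) = ι ((h • d) (u r)) := (map_smul ι h _).symm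
      _ = s • h • u r := by rw [hs ⟨h, hh⟩, LinearMap.smul_apply, map_smul, hc]
      _ = ι (F (h • d) r) := by
        rw [hs ⟨h, hh⟩, map_smul F, LinearMap.smul_apply, map_smul, ← hu ⟨h, hh⟩]
      _ = h • ι (F d r) := by rw [map_smul F, LinearMap.smul_apply, map_smul]

theorem exists_linearEquiv_end_dual :
    ∃ e : R ≃ₗ[S] ((R →ₗ[S] B) →ₗ[S] (R →ₗ[S] B)),
      (∀ x y : R, (e x).comp (e y) = (e y).comp (e x)) ∧ ∃ one : R, e one = LinearMap.id := by
  let atGen := LinearEquiv.ofBijective _ (hR.bijective_applyₗ hJ)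
  let precomp := LinearEquiv.ofBijective _ (hR.bijective_llcomp_flip hJ hι hrange)
  refine ⟨atGen.symm ≪≫ₗ precomp, fun x y ↦ LinearMap.ext fun d ↦ ?_, e₀, ?_⟩
  · exact congrArg d.comp (hR.linearMap_comp_comm hJ (atGen.symm y) (atGen.symm x))
  · have hone : atGen.symm e₀ = LinearMap.id := atGen.symm_apply_eq.2 rfl
    rw [LinearEquiv.trans_apply, hone]
    rfl

end Singleton

theorem exists_quotient_annihilator_embedding {e₀ : R} (hR : IsIdealClosed J R)
    (hJ : ∀ g ∈ J, ∀ r : R, g • r ∈ S ∙ e₀) :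
    ∃ ι : (S ⧸ Module.annihilator S R) →ₗ[S] R, Injective ι ∧ LinearMap.range ι = S ∙ e₀ := by
  have hle : Module.annihilator S R ≤ LinearMap.ker (LinearMap.toSpanSingleton S R e₀) :=
    fun s hs ↦ Module.mem_annihilator.1 hs e₀
  refine ⟨Submodule.liftQ _ _ hle, ?_, ?_⟩
  · exact LinearMap.ker_eq_bot.1 <| Submodule.ker_liftQ_eq_bot _ _ _ fun s hs ↦
      hR.mem_annihilator_of_smul_eq_zero hJ hs
  · rw [Submodule.range_liftQ, LinearMap.range_toSpanSingleton]

end IsIdealClosed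

end IdealClosed

section

variable {S R : Type u} [CommRing S] [AddCommGroup R] [Module S R] {J : Ideal S}

theorem ExtVanishesBelow.eq_zero_of_forall_smul_eq_zero
    (h : ExtVanishesBelow (ModuleCat.of S (S ⧸ J)) (ModuleCat.of S R) 1) {x : R}
    (hx : ∀ g ∈ J, g • x = 0) : x = 0 := by
  have := h 0 one_pos
  let l : S ⧸ J →ₗ[S] R := Submodule.liftQ J (LinearMap.toSpanSingleton S R x) hx
  have hl : ModuleCat.ofHom l = 0 := (Ext.mk₀_eq_zero_iff _).1 (Subsingleton.elim _ _)
  calc x = l (Submodule.Quotient.mk 1) := (one_smul S x).symm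
    _ = 0 := ConcreteCategory.congr_hom hl _

theorem ExtVanishesBelow.isIdealClosed
    (h : ExtVanishesBelow (ModuleCat.of S (S ⧸ J)) (ModuleCat.of S R) 2) :
    IsIdealClosed J R := by
  intro l
  have := h 1 one_lt_two
  have hJ := LinearMap.exact_subtype_mkQ J
  have hX := ModuleCat.shortComplex_shortExact
    (ModuleCat.shortComplexOfCompEqZero J.subtype J.mkQ hJ.linearMap_comp_eq_zero)
    hJ J.subtype_injective J.mkQ_surjective
  obtain ⟨y, hy⟩ := Ext.contravariant_sequence_exact₁ hX (ModuleCat.of S R)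
    (Ext.mk₀ (ModuleCat.ofHom l)) rfl
    (Subsingleton.elim (α := Ext (ModuleCat.of S (S ⧸ J)) _ 1) _ _)
  obtain ⟨y, rfl⟩ := (Ext.mk₀_bijective _ _).2 y
  rw [Ext.mk₀_comp_mk₀] at hy
  have hyl (g : J) : y.hom (g : S) = l g :=
    ConcreteCategory.congr_hom ((Ext.mk₀_bijective _ _).1 hy) g
  have hyl' (g : J) : (g : S) • y.hom (1 : S) = l g := by
    rw [← hyl, ← map_smul, smul_eq_mul, mul_one]
  refine ⟨y.hom (1 : S), hyl', fun x hx ↦ sub_eq_zero.1 ?_⟩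
  refine (h.mono one_le_two).eq_zero_of_forall_smul_eq_zero fun g hg ↦ ?_
  rw [smul_sub, hx ⟨g, hg⟩, hyl' ⟨g, hg⟩, sub_self]

end

section Fitting

variable {S : Type*} [CommRing S] {M : Type*} [AddCommGroup M] [Module S M]

theorem det_submatrix_mem_annihilator {m n : Type*} [Fintype m] [DecidableEq m] [Fintype n]
    {φ : Matrix m n S} {p : (m → S) →ₗ[S] M} (hp : Surjective p)
    (hφp : ∀ v, p (φ *ᵥ v) = 0) (c : m → n) :
    (φ.submatrix id c).det ∈ Module.annihilator S M := by
  classical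
  refine Module.mem_annihilator.2 fun x ↦ ?_
  obtain ⟨v, rfl⟩ := hp x
  set N := φ.submatrix id c with hN
  have hcol (w : m → S) : N *ᵥ w = φ *ᵥ ∑ i, w i • Pi.single (c i) 1 := by
    simp only [Matrix.mulVec_sum, Matrix.mulVec_smul, Matrix.mulVec_single_one]
    ext j
    simp [hN, Matrix.mulVec, dotProduct, mul_comm]
  have hdet : N.det • v = N *ᵥ (N.adjugate *ᵥ v) := by
    rw [Matrix.mulVec_mulVec, Matrix.mul_adjugate, Matrix.smul_mulVec, Matrix.one_mulVec]
  rw [← map_smul, hdet, hcol, hφp]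

theorem smul_mem_span_singleton_of_mem_span_minors {n : ℕ} {κ : Type*} [Fintype κ]
    {φ : Matrix (Fin (n + 1)) κ S} {p : (Fin (n + 1) → S) →ₗ[S] M} (hp : Surjective p)
    (hφp : ∀ v, p (φ *ᵥ v) = 0) {g : S}
    (hg : g ∈ Ideal.span (Set.range fun c : Fin n → κ ↦ (φ.submatrix Fin.succ c).det)) (x : M) :
    g • x ∈ S ∙ p (Pi.single 0 1) := by
  set N := S ∙ p (Pi.single 0 1)
  let p' : (Fin n → S) →ₗ[S] M ⧸ N :=
    N.mkQ ∘ₗ p ∘ₗ (Fin.consLinearEquiv S fun _ ↦ S).toLinearMap ∘ₗ LinearMap.inr S S (Fin n → S)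
  have hp' (w : Fin (n + 1) → S) : p' (w ∘ Fin.succ) = N.mkQ (p w) := by
    have hw : w = w 0 • Pi.single 0 1 + Fin.cons 0 (w ∘ Fin.succ) := by
      ext j
      cases j using Fin.cases <;> simp
    have h₀ : N.mkQ (p (Pi.single 0 1)) = 0 :=
      (Submodule.Quotient.mk_eq_zero N).2 (Submodule.mem_span_singleton_self _)
    conv_rhs => rw [hw, map_add, map_smul, map_add, map_smul, h₀, smul_zero, zero_add]
    rfl
  have hle : Ideal.span (Set.range fun c : Fin n → κ ↦ (φ.submatrix Fin.succ c).det) ≤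
      Module.annihilator S (M ⧸ N) := by
    refine Ideal.span_le.2 <| Set.range_subset_iff.2 fun c ↦
      det_submatrix_mem_annihilator (φ := φ.submatrix Fin.succ id) (p := p') ?_ ?_ c
    · refine fun y ↦ ?_
      obtain ⟨w, rfl⟩ := (N.mkQ_surjective.comp hp) y
      exact ⟨w ∘ Fin.succ, hp' w⟩
    · exact fun v ↦ (hp' (φ *ᵥ v)).trans (by rw [hφp, map_zero])
  rw [← Submodule.Quotient.mk_eq_zero, Submodule.Quotient.mk_smul]
  exact Module.mem_annihilator.1 (hle hg) _

end Fitting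

theorem graded_ring_structure_from_heartsuit_general {S R : Type u} [CommRing S] [AddCommGroup R]
    [Module S R] {n : ℕ} {ι₁ ι₂ : Type} [Fintype ι₁] [Fintype ι₂]
    {φ : Matrix (Fin (n + 1)) ι₁ S} {ψ : Matrix ι₁ ι₂ S} {p : (Fin (n + 1) → S) →ₗ[S] R}
    (hp : Surjective p) (hφp : Exact φ.mulVecLin p) (hψφ : Exact ψ.mulVecLin φ.mulVecLin)
    (hψ : Injective ψ.mulVecLin) {rs : List S} (hreg : IsWeaklyRegular S rs)
    (hlen : 4 ≤ rs.length)
    (hminors : ∀ x ∈ rs,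
      x ∈ Ideal.span (Set.range fun c : Fin n → ι₁ ↦ (φ.submatrix Fin.succ c).det)) :
    ∃ e : R ≃ₗ[S]
        ((R →ₗ[S] (S ⧸ Module.annihilator S R)) →ₗ[S]
          (R →ₗ[S] (S ⧸ Module.annihilator S R))),
      (∀ x y : R, (e x).comp (e y) = (e y).comp (e x)) ∧
      ∃ one : R, e one = LinearMap.id := by
  let J := Ideal.ofList rs
  have hS : ExtVanishesBelow (ModuleCat.of S (S ⧸ J)) (ModuleCat.of S S) 4 :=
    (ExtVanishesBelow.of_isWeaklyRegular
      (fun a ha ↦ Ideal.annihilator_quotient.ge (Ideal.subset_span (s := {x | x ∈ rs}) ha))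
      hreg).mono hlen
  have hR : IsIdealClosed J R := ExtVanishesBelow.isIdealClosed <|
    .of_resolution hψ hψφ hφp hp (hS.pi ι₂) ((hS.pi ι₁).mono (by lia)) ((hS.pi _).mono (by lia))
  have hJ (g : S) (hg : g ∈ J) (x : R) : g • x ∈ S ∙ p (Pi.single 0 1) :=
    smul_mem_span_singleton_of_mem_span_minors hp hφp.apply_apply_eq_zero
      (Ideal.span_le.2 hminors hg) x
  obtain ⟨ι, hι, hrange⟩ := hR.exists_quotient_annihilator_embedding hJ
  exact hR.exists_linearEquiv_end_dual hJ hι hrange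

/-- **Theorem 1.3 (theorem 1.1 bis, graded case).**  Let `S = S₀ ⊕ S₁ ⊕ ⋯` be a graded
Cohen-Macaulay ring, `S₀` a field and `S` a finitely generated `S₀`-algebra, and let `R`
be a finite graded `S`-module with a minimal graded free resolution
`0 → ⊕ S(-s_l) →ψ ⊕ S(-r_k) →φ ⊕ S(-q_j) →p R → 0`.  Let `φ'` be `φ` with its first row
erased and `I'` its ideal of maximal minors.  If `depth(Ann_S R, S) = 2` and
`depth(I', S) ≥ 4` then, with `S_Y := S ⧸ Ann_S R` and `C := Hom_{S_Y}(R, S_Y)`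
(`S`-linear and `S_Y`-linear maps coincide), `R ≅ Hom_{S_Y}(C, C)` as `S_Y`-modules, and
composition of endomorphisms of `C` transports to a commutative unital multiplication on
`R`, making it an `S`-algebra. -/
theorem graded_ring_structure_from_heartsuit
    (K S : Type) [Field K] [CommRing S] [Algebra K S]
    (𝒜 : ℕ → Submodule K S) [GradedAlgebra 𝒜]
    (hfg : Algebra.FiniteType K S)
    (h0 : ∀ x ∈ 𝒜 0, ∃ c : K, x = algebraMap K S c)
    (hCM : IsCMGraded K S 𝒜)
    (R : Type) [AddCommGroup R] [Module S R] [Module K R] [IsScalarTower K S R]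
    [Module.Finite S R]
    (ℳ : ℤ → Submodule K R) [DirectSum.Decomposition ℳ]
    (hcompat : ∀ (i : ℕ) (j : ℤ) (a : S) (x : R), a ∈ 𝒜 i → x ∈ ℳ j →
      a • x ∈ ℳ ((i : ℤ) + j))
    (n₀ n₁ n₂ : ℕ)
    (q : Fin (n₀ + 1) → ℤ) (r : Fin n₁ → ℤ) (s : Fin n₂ → ℤ)
    (φ : Matrix (Fin (n₀ + 1)) (Fin n₁) S) (ψ : Matrix (Fin n₁) (Fin n₂) S)
    (p : (Fin (n₀ + 1) → S) →ₗ[S] R)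
    (hres : IsFreeRes₂ S φ ψ p)
    (hφdeg : ∀ j k, homogOfDeg K S 𝒜 (r k - q j) (φ j k))
    (hψdeg : ∀ k l, homogOfDeg K S 𝒜 (s l - r k) (ψ k l))
    (hpdeg : ∀ j, p (Pi.single j 1) ∈ ℳ (q j))
    (hmin : (∀ j k, φ j k ∈ grIrrel K S 𝒜) ∧ ∀ k l, ψ k l ∈ grIrrel K S 𝒜)
    (hdepthAnn : depthEq S (Module.annihilator S R) S 2)
    (hheart : depthGE S (maxMinors S (φ.submatrix Fin.succ id)) S 4) :
    ∃ e : R ≃ₗ[S]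
        ((R →ₗ[S] (S ⧸ Module.annihilator S R)) →ₗ[S]
          (R →ₗ[S] (S ⧸ Module.annihilator S R))),
      (∀ x y : R, (e x).comp (e y) = (e y).comp (e x)) ∧
      ∃ one : R, e one = LinearMap.id := by
  obtain ⟨hp, hφp, hψφ, hψ⟩ := hres
  obtain ⟨rs, hlen, hminors, hreg⟩ := hheart
  have hle : maxMinors S (φ.submatrix Fin.succ id) ≤
      Ideal.span (Set.range fun c : Fin n₀ → Fin n₁ ↦ (φ.submatrix Fin.succ c).det) :=
    Ideal.span_mono <| by rintro _ ⟨c, -, rfl⟩; exact ⟨c, rfl⟩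
  exact graded_ring_structure_from_heartsuit_general hp (LinearMap.exact_iff.2 hφp)
    (LinearMap.exact_iff.2 hψφ) (LinearMap.ker_eq_bot.1 hψ) hreg.toIsWeaklyRegular hlen.ge
    fun x hx ↦ hle (hminors x hx)
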